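/- For the one-group shrinkage prior with a > 0, fix any c > 2 and any ρ > c, and let ζ_τ = √(2 log(1/τ^{2a})). Then there exists a function ε : (0,1) → ℝ with ε(τ) → 0 as τ → 0 such that for every θ ∈ ℝ and every sufficiently small τ ∈ (0,1), E_θ (T_τ(X) − X)² ≤ ρ² ζ_τ² (1 + ε(τ)), where X ~ N(θ,1) and E_θ denotes expectation under N(θ,1); in particular the bound holds uniformly in θ. -/

import Mathlib

open MeasureTheory Filter Set

noncomputable section

namespace OneGroup

/-- A one-group (global-local) shrinkage prior: the local variance `λ²` has density
`π(λ²) = K (λ²)^{-a-1} L(λ²)` on `(0,∞)`, where `L` is a positive, measurable,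
non-constant slowly varying function, bounded above by `M`, and bounded below by
`c₀` on `[t₀, ∞)`. -/
structure Prior where
  K : ℝ
  a : ℝ
  L : ℝ → ℝ
  M : ℝ
  c₀ : ℝ
  t₀ : ℝ
  K_pos : 0 < K
  a_pos : 0 < a
  L_pos : ∀ t : ℝ, 0 < t → 0 < L t
  L_meas : Measurable L
  L_slow : ∀ c : ℝ, 0 < c → Tendsto (fun t => L (c * t) / L t) atTop (nhds 1)
  L_nonconst : ∃ s : ℝ, 0 < s ∧ ∃ t : ℝ, 0 < t ∧ L s ≠ L t
  M_pos : 0 < M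
  L_le : ∀ t : ℝ, 0 < t → L t ≤ M
  c₀_pos : 0 < c₀
  t₀_pos : 0 < t₀
  L_ge : ∀ t : ℝ, t₀ ≤ t → c₀ ≤ L t

/-- The (unnormalized) posterior weight, as a function of `t = λ²`, entering all
posterior expectations of functions of the shrinkage coefficient `κ = 1/(1+tτ²)`. -/
def wt (P : Prior) (x τ t : ℝ) : ℝ :=
  (1 + t * τ ^ 2) ^ (-(1:ℝ)/2) * t ^ (-P.a - 1) * P.L t *
    Real.exp (-x ^ 2 / (2 * (1 + t * τ ^ 2)))

/-- Posterior expectation `E(g(κ) | x, τ)` of a function `g` of the shrinkage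
coefficient `κ = 1/(1+λ²τ²)`. -/
def postExp (P : Prior) (g : ℝ → ℝ) (x τ : ℝ) : ℝ :=
  (∫ t in Ioi (0:ℝ), g (1 / (1 + t * τ ^ 2)) * wt P x τ t) /
    (∫ t in Ioi (0:ℝ), wt P x τ t)

/-- The posterior mean `T_τ(x) = x (1 - E(κ | x, τ))`. -/
def T (P : Prior) (τ x : ℝ) : ℝ := x * (1 - postExp P (fun κ => κ) x τ)

/-- The marginal prior density `p_τ(θ)` of `θ`. -/
def pdens (P : Prior) (τ θ : ℝ) : ℝ :=
  ∫ u in Ioi (0:ℝ),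
    (Real.sqrt (2 * Real.pi * u * τ ^ 2))⁻¹ * Real.exp (-θ ^ 2 / (2 * u * τ ^ 2)) *
      (P.K * u ^ (-P.a - 1) * P.L u)

/-- The unnormalized posterior density of `θ` given an observation `x ~ N(θ,1)`. -/
def postw (P : Prior) (τ x θ : ℝ) : ℝ := Real.exp (-(x - θ) ^ 2 / 2) * pdens P τ θ

/-- The `k`-th posterior moment of `θ` given `x`. -/
def postMoment (P : Prior) (τ x : ℝ) (k : ℕ) : ℝ :=
  (∫ θ : ℝ, θ ^ k * postw P τ x θ) / (∫ θ : ℝ, postw P τ x θ)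

/-- The posterior variance `Var(θ | x)`. -/
def postVar (P : Prior) (τ x : ℝ) : ℝ := postMoment P τ x 2 - (postMoment P τ x 1) ^ 2

/-- The standard normal density. -/
def gauss (z : ℝ) : ℝ := (Real.sqrt (2 * Real.pi))⁻¹ * Real.exp (-z ^ 2 / 2)

/-- Expectation of `f(X)` for `X ~ N(θ, 1)`. -/
def E1 (θ : ℝ) (f : ℝ → ℝ) : ℝ := ∫ x : ℝ, f x * gauss (x - θ)

/-- Expectation of `f(X)` for `X ~ N_n(θ, I_n)`. -/
def EN (n : ℕ) (θ : Fin n → ℝ) (f : (Fin n → ℝ) → ℝ) : ℝ :=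
  ∫ x : Fin n → ℝ, f x * ∏ i, gauss (x i - θ i)

/-- The posterior probability `Π(A | x)` of a set `A ⊆ ℝⁿ` given data `x`,
for the coordinatewise-independent posterior. -/
def postProb (P : Prior) (τ : ℝ) {n : ℕ} (x : Fin n → ℝ) (A : Set (Fin n → ℝ)) : ℝ :=
  (∫ θ in A, ∏ i, postw P τ (x i) (θ i)) /
    (∫ θ : Fin n → ℝ, ∏ i, postw P τ (x i) (θ i))

/-- The set `l₀[p]` of nearly black vectors in `ℝⁿ`. -/
def nearlyBlack (n p : ℕ) : Set (Fin n → ℝ) :=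
  {θ | (Finset.univ.filter fun i => θ i ≠ 0).card ≤ p}

end OneGroup

open OneGroup

namespace OneGroup

/-- unnormalized prior weight -/
def pw (P : Prior) (t : ℝ) : ℝ := t ^ (-P.a - 1) * P.L t

lemma pw_nonneg (P : Prior) {t : ℝ} (ht : 0 < t) : 0 ≤ pw P t :=
  mul_nonneg (Real.rpow_nonneg ht.le _) (P.L_pos t ht).le

lemma pw_meas (P : Prior) : Measurable (pw P) := by
  have := P.L_meas
  unfold pw
  fun_prop

lemma wt_eq (P : Prior) (x τ t : ℝ) : wt P x τ t =
    ((1 + t * τ ^ 2) ^ (-(1:ℝ)/2) * Real.exp (-x ^ 2 / (2 * (1 + t * τ ^ 2)))) * pw P t := by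
  unfold wt pw; ring

lemma wt_meas (P : Prior) (x τ : ℝ) : Measurable (wt P x τ) := by
  have := P.L_meas
  unfold wt
  fun_prop

lemma wt_nonneg (P : Prior) (x τ : ℝ) {t : ℝ} (ht : 0 < t) : 0 ≤ wt P x τ t := by
  rw [wt_eq]
  have := pw_nonneg P ht
  positivity

lemma one_add_rpow_le (τ : ℝ) {t : ℝ} (ht : 0 < t) :
    (1 + t * τ ^ 2) ^ (-(1:ℝ)/2) ≤ 1 := by
  apply Real.rpow_le_one_of_one_le_of_nonpos
  · nlinarith [mul_nonneg ht.le (sq_nonneg τ)]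
  · norm_num

lemma wt_le_exp (P : Prior) (x τ : ℝ) {t : ℝ} (ht : 0 < t) :
    wt P x τ t ≤ Real.exp (-x ^ 2 / (2 * (1 + t * τ ^ 2))) * pw P t := by
  rw [wt_eq]
  apply mul_le_mul_of_nonneg_right _ (pw_nonneg P ht)
  have := one_add_rpow_le τ ht
  have h2 := (Real.exp_pos (-x ^ 2 / (2 * (1 + t * τ ^ 2)))).le
  nlinarith

lemma wt_le (P : Prior) (x τ : ℝ) {t : ℝ} (ht : 0 < t) : wt P x τ t ≤ pw P t := by
  refine (wt_le_exp P x τ ht).trans ?_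
  have h0 := pw_nonneg P ht
  have : Real.exp (-x ^ 2 / (2 * (1 + t * τ ^ 2))) ≤ 1 := by
    rw [Real.exp_le_one_iff]
    apply div_nonpos_of_nonpos_of_nonneg
    · nlinarith [sq_nonneg x]
    · positivity
  nlinarith

lemma pw_int_Ioi_one (P : Prior) : IntegrableOn (pw P) (Ioi 1) := by
  have h : IntegrableOn (fun t : ℝ => t ^ (-P.a - 1) * P.M) (Ioi 1) := by
    apply Integrable.mul_const
    exact integrableOn_Ioi_rpow_of_lt (by linarith [P.a_pos]) one_pos
  refine Integrable.mono' h (pw_meas P).aestronglyMeasurable ?_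
  refine (ae_restrict_iff' measurableSet_Ioi).2 (ae_of_all _ fun t ht => ?_)
  have ht0 : (0:ℝ) < t := lt_trans one_pos ht
  rw [Real.norm_of_nonneg (pw_nonneg P ht0)]
  exact mul_le_mul_of_nonneg_left (P.L_le t ht0) (Real.rpow_nonneg ht0.le _)

lemma pw_int_of_wt (P : Prior) (x τ : ℝ) (h : IntegrableOn (wt P x τ) (Ioi 0)) :
    IntegrableOn (pw P) (Ioi 0) := by
  rw [← Ioc_union_Ioi_eq_Ioi (zero_le_one' ℝ)]
  refine IntegrableOn.union ?_ (pw_int_Ioi_one P)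
  have h1 : IntegrableOn (fun t => ((1 + τ ^ 2) ^ ((1:ℝ)/2) * Real.exp (x ^ 2 / 2)) * wt P x τ t)
      (Ioc 0 1) :=
    Integrable.const_mul (h.mono_set Ioc_subset_Ioi_self) _
  refine Integrable.mono' h1 (pw_meas P).aestronglyMeasurable ?_
  refine (ae_restrict_iff' measurableSet_Ioc).2 (ae_of_all _ fun t ht => ?_)
  have ht0 : (0:ℝ) < t := ht.1
  have hp := pw_nonneg P ht0
  have hb : 0 < 1 + t * τ ^ 2 := by positivity
  rw [Real.norm_of_nonneg hp, wt_eq, ← mul_assoc]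
  refine le_mul_of_one_le_left hp ?_
  have e1 : 1 ≤ (1 + τ ^ 2) ^ ((1:ℝ)/2) * (1 + t * τ ^ 2) ^ (-(1:ℝ)/2) := by
    have : (1 + t * τ ^ 2) ^ ((1:ℝ)/2) ≤ (1 + τ ^ 2) ^ ((1:ℝ)/2) := by
      apply Real.rpow_le_rpow hb.le _ (by norm_num)
      nlinarith [sq_nonneg τ, ht.2]
    calc (1:ℝ) = (1 + t * τ ^ 2) ^ ((1:ℝ)/2) * (1 + t * τ ^ 2) ^ (-(1:ℝ)/2) := by
          rw [← Real.rpow_add hb]; norm_num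
      _ ≤ _ := by gcongr
  have e2 : 1 ≤ Real.exp (x ^ 2 / 2) * Real.exp (-x ^ 2 / (2 * (1 + t * τ ^ 2))) := by
    rw [← Real.exp_add]
    apply Real.one_le_exp
    rw [neg_div]
    have : x ^ 2 / (2 * (1 + t * τ ^ 2)) ≤ x ^ 2 / 2 := by
      apply div_le_div_of_nonneg_left (sq_nonneg x) two_pos
      nlinarith [mul_nonneg ht0.le (sq_nonneg τ)]
    linarith
  calc (1:ℝ) ≤ _ := one_le_mul_of_one_le_of_one_le e1 e2
    _ = _ := by ring

lemma wt_int (P : Prior) (x τ : ℝ) (h : IntegrableOn (pw P) (Ioi 0)) :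
    IntegrableOn (wt P x τ) (Ioi 0) := by
  refine Integrable.mono' h (wt_meas P x τ).aestronglyMeasurable ?_
  refine (ae_restrict_iff' measurableSet_Ioi).2 (ae_of_all _ fun t ht => ?_)
  rw [Real.norm_of_nonneg (wt_nonneg P x τ ht)]
  exact wt_le P x τ ht

lemma kap_nonneg (τ : ℝ) {t : ℝ} (ht : 0 < t) : 0 ≤ 1 / (1 + t * τ ^ 2) := by positivity

lemma kap_le (τ : ℝ) {t : ℝ} (ht : 0 < t) : 1 / (1 + t * τ ^ 2) ≤ 1 := by
  rw [div_le_one (by positivity)]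
  nlinarith [mul_nonneg ht.le (sq_nonneg τ)]

lemma postExp_nonneg (P : Prior) (x τ : ℝ) : 0 ≤ postExp P (fun κ => κ) x τ := by
  unfold postExp
  apply div_nonneg
  · exact setIntegral_nonneg measurableSet_Ioi
      fun t ht => mul_nonneg (kap_nonneg τ ht) (wt_nonneg P x τ ht)
  · exact setIntegral_nonneg measurableSet_Ioi fun t ht => wt_nonneg P x τ ht

lemma postExp_le_one (P : Prior) (x τ : ℝ) (h : IntegrableOn (pw P) (Ioi 0)) :
    postExp P (fun κ => κ) x τ ≤ 1 := by
  unfold postExp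
  apply div_le_one_of_le₀
  · refine integral_mono_of_nonneg ?_ (wt_int P x τ h) ?_
    · exact (ae_restrict_iff' measurableSet_Ioi).2 (ae_of_all _
        fun t ht => mul_nonneg (kap_nonneg τ ht) (wt_nonneg P x τ ht))
    · exact (ae_restrict_iff' measurableSet_Ioi).2 (ae_of_all _
        fun t ht => mul_le_of_le_one_left (wt_nonneg P x τ ht) (kap_le τ ht))
  · exact setIntegral_nonneg measurableSet_Ioi fun t ht => wt_nonneg P x τ ht

lemma num_le (P : Prior) (x τ s : ℝ) (hs : 0 ≤ s) (h : IntegrableOn (pw P) (Ioi 0)) :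
    (∫ t in Ioi (0:ℝ), (fun κ => κ) (1 / (1 + t * τ ^ 2)) * wt P x τ t) ≤
      s * (∫ t in Ioi (0:ℝ), wt P x τ t) +
        Real.exp (-(x ^ 2 * s) / 2) * ∫ t in Ioi (0:ℝ), pw P t := by
  rw [← integral_const_mul, ← integral_const_mul, ← integral_add
    (Integrable.const_mul (wt_int P x τ h) _) (Integrable.const_mul h _)]
  refine integral_mono_of_nonneg ?_ ((Integrable.const_mul (wt_int P x τ h) _).add
    (Integrable.const_mul h _)) ?_
  · exact (ae_restrict_iff' measurableSet_Ioi).2 (ae_of_all _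
        fun t ht => mul_nonneg (kap_nonneg τ ht) (wt_nonneg P x τ ht))
  · refine (ae_restrict_iff' measurableSet_Ioi).2 (ae_of_all _ fun t ht => ?_)
    have ht0 : (0:ℝ) < t := ht
    have hw := wt_nonneg P x τ ht0
    have hp := pw_nonneg P ht0
    have he := Real.exp_pos (-(x ^ 2 * s) / 2)
    show 1 / (1 + t * τ ^ 2) * wt P x τ t ≤ s * wt P x τ t + Real.exp (-(x ^ 2 * s) / 2) * pw P t
    by_cases hk : 1 / (1 + t * τ ^ 2) ≤ s
    · have := mul_le_mul_of_nonneg_right hk hw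
      have := mul_nonneg he.le hp
      linarith
    · push Not at hk
      have h1 : 1 / (1 + t * τ ^ 2) * wt P x τ t ≤ wt P x τ t :=
        mul_le_of_le_one_left hw (kap_le τ ht0)
      have h2 := wt_le_exp P x τ ht0
      have h3 : Real.exp (-x ^ 2 / (2 * (1 + t * τ ^ 2))) ≤ Real.exp (-(x ^ 2 * s) / 2) := by
        apply Real.exp_le_exp.2
        have : -x ^ 2 / (2 * (1 + t * τ ^ 2)) = -(x ^ 2 * (1 / (1 + t * τ ^ 2))) / 2 := by
          field_simp
        rw [this]
        have := mul_le_mul_of_nonneg_left hk.le (sq_nonneg x)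
        linarith
      have h4 := mul_le_mul_of_nonneg_right h3 hp
      have := mul_nonneg hs hw
      linarith

/-- constant in the lower bound for the denominator -/
def Cst (P : Prior) : ℝ := (3:ℝ) ^ (-(1:ℝ)/2) * 2 ^ (-P.a - 1) * P.c₀ * Real.exp (-1/2)

lemma Cst_pos (P : Prior) : 0 < Cst P := by
  have := P.c₀_pos
  unfold Cst
  positivity

lemma den_ge (P : Prior) (x τ : ℝ) (hτ : τ ∈ Ioo (0:ℝ) 1) (hx : 1 ≤ x) (hx2 : P.t₀ ≤ x)
    (h : IntegrableOn (pw P) (Ioi 0)) :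
    Cst P * τ ^ (2 * P.a) * x ^ (-(2 * P.a + 1)) ≤ ∫ t in Ioi (0:ℝ), wt P x τ t := by
  obtain ⟨hτ0, hτ1⟩ := hτ
  have hx0 : 0 < x := by linarith
  have hc := P.c₀_pos
  have hτ2 : τ ^ 2 ≤ 1 := by nlinarith
  set A : ℝ := x ^ 2 / τ ^ 2 with hA
  have hA0 : 0 < A := by positivity
  have hAτ : A * τ ^ 2 = x ^ 2 := by rw [hA]; field_simp
  have hAx : x ≤ A := by nlinarith
  set m : ℝ := (3 * x ^ 2) ^ (-(1:ℝ)/2) * (2 * A) ^ (-P.a - 1) * P.c₀ * Real.exp (-1/2) with hm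
  have step : (∫ t in Ioc A (2 * A), m) ≤ ∫ t in Ioi (0:ℝ), wt P x τ t := by
    have hsub : Ioc A (2 * A) ⊆ Ioi (0:ℝ) := fun t ht => lt_trans hA0 ht.1
    calc (∫ t in Ioc A (2 * A), m) ≤ ∫ t in Ioc A (2 * A), wt P x τ t := by
          refine setIntegral_mono_on (integrableOn_const (by simp)) ((wt_int P x τ h).mono_set hsub)
            measurableSet_Ioc fun t ht => ?_
          have ht0 : 0 < t := hsub ht
          have hu1 : x ^ 2 ≤ t * τ ^ 2 := by
            rw [← hAτ]; exact mul_le_mul_of_nonneg_right ht.1.le (sq_nonneg _)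
          have hu2 : t * τ ^ 2 ≤ 2 * x ^ 2 := by
            rw [← hAτ, ← mul_assoc]; exact mul_le_mul_of_nonneg_right ht.2 (sq_nonneg _)
          have hb : 0 < 1 + t * τ ^ 2 := by positivity
          have e1 : (3 * x ^ 2) ^ (-(1:ℝ)/2) ≤ (1 + t * τ ^ 2) ^ (-(1:ℝ)/2) := by
            apply Real.rpow_le_rpow_of_nonpos hb _ (by norm_num)
            nlinarith
          have e2 : (2 * A) ^ (-P.a - 1) ≤ t ^ (-P.a - 1) :=
            Real.rpow_le_rpow_of_nonpos ht0 ht.2 (by linarith [P.a_pos])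
          have e3 : P.c₀ ≤ P.L t := P.L_ge t (by linarith [ht.1])
          have e4 : Real.exp (-1/2) ≤ Real.exp (-x ^ 2 / (2 * (1 + t * τ ^ 2))) := by
            apply Real.exp_le_exp.2
            rw [neg_div, neg_div, neg_le_neg_iff, div_le_div_iff₀ (by positivity) (by norm_num)]
            nlinarith
          have hL := (P.L_pos t ht0).le
          unfold wt
          rw [hm]
          gcongr
      _ ≤ _ := by
          refine setIntegral_mono_set (wt_int P x τ h) ?_ (HasSubset.Subset.eventuallyLE hsub)
          exact (ae_restrict_iff' measurableSet_Ioi).2 (ae_of_all _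
            fun t ht => wt_nonneg P x τ ht)
  refine le_trans (le_of_eq ?_) step
  have hvol : (volume : Measure ℝ).real (Ioc A (2 * A)) = A := by
    rw [Real.volume_real_Ioc_of_le (by linarith)]; ring
  rw [setIntegral_const, hvol, smul_eq_mul, hm, Cst,
    Real.mul_rpow (by norm_num) (by positivity), Real.mul_rpow (by norm_num) hA0.le]
  have k1 : (x ^ 2) ^ (-(1:ℝ)/2) = x ^ (-1:ℝ) := by
    rw [← Real.rpow_natCast, ← Real.rpow_mul hx0.le]; norm_num
  have k2 : A * A ^ (-P.a - 1) = A ^ (-P.a) := by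
    rw [← Real.rpow_one_add' hA0.le (by linarith [P.a_pos])]
    congr 1; ring
  have k3 : A ^ (-P.a) = x ^ (-(2 * P.a)) * τ ^ (2 * P.a) := by
    rw [hA, Real.div_rpow (by positivity) (by positivity), ← Real.rpow_natCast,
      ← Real.rpow_natCast, ← Real.rpow_mul hx0.le, ← Real.rpow_mul hτ0.le, div_eq_mul_inv,
      ← Real.rpow_neg hτ0.le]
    congr 2 <;> push_cast <;> ring
  have k4 : x ^ (-(2 * P.a + 1)) = x ^ (-1:ℝ) * x ^ (-(2 * P.a)) := by
    rw [← Real.rpow_add hx0]; congr 1; ring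
  rw [k1, k4]
  calc _ = ((3:ℝ) ^ (-(1:ℝ)/2) * 2 ^ (-P.a - 1) * P.c₀ * Real.exp (-1/2)) * x ^ (-1:ℝ) *
        (x ^ (-(2 * P.a)) * τ ^ (2 * P.a)) := by ring
    _ = _ := by rw [← k3, ← k2]; ring

lemma growth (P : Prior) (I : ℝ) : ∃ N : ℝ, 1 ≤ N ∧ P.t₀ ≤ N ∧ ∀ x, N ≤ x →
    I * (x ^ (2 * P.a + 2) * Real.exp (-(1/4) * x)) ≤ Cst P := by
  have h := tendsto_rpow_mul_exp_neg_mul_atTop_nhds_zero (2 * P.a + 2) (1/4) (by norm_num)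
  have h2 := h.const_mul I
  rw [mul_zero] at h2
  have h3 := h2.eventually (ge_mem_nhds (Cst_pos P))
  obtain ⟨N, hN⟩ := eventually_atTop.1 h3
  exact ⟨max N (max 1 P.t₀), by simp, by simp, fun x hx => hN x (le_trans (le_max_left _ _) hx)⟩

lemma key (P : Prior) (ρ N τ Z x : ℝ) (hρ : 2 < ρ) (h : IntegrableOn (pw P) (Ioi 0))
    (hN1 : 1 ≤ N) (hNt : P.t₀ ≤ N)
    (hN : ∀ x, N ≤ x → (∫ t in Ioi (0:ℝ), pw P t) *
      (x ^ (2 * P.a + 2) * Real.exp (-(1/4) * x)) ≤ Cst P)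
    (hτ : τ ∈ Ioo (0:ℝ) 1) (hZ : N ≤ Z) (hτZ : τ ^ (2 * P.a) = Real.exp (-Z ^ 2 / 2))
    (hx : ρ * Z < x) : x * postExp P (fun κ => κ) x τ ≤ ρ * Z := by
  have hZ1 : 1 ≤ Z := hN1.trans hZ
  have hxZ : 2 * Z ≤ x := by nlinarith
  have hx0 : 0 < x := by linarith
  set I := ∫ t in Ioi (0:ℝ), pw P t with hI
  have hI0 : 0 ≤ I := setIntegral_nonneg measurableSet_Ioi fun t ht => pw_nonneg P ht
  have hD := den_ge P x τ hτ (by linarith) (by linarith) h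
  set D := ∫ t in Ioi (0:ℝ), wt P x τ t with hDdef
  have hDpos : 0 < D := by
    have := Cst_pos P
    have := hτ.1
    exact lt_of_lt_of_le (by positivity) hD
  set s := ρ * Z / (2 * x) with hs
  have hs0 : 0 ≤ s := by positivity
  have hnum := num_le P x τ s hs0 h
  have hxs : x * s = ρ * Z / 2 := by rw [hs]; field_simp
  have hmain : x * (Real.exp (-(x ^ 2 * s) / 2) * I) ≤ ρ * Z / 2 * D := by
    have e1 : x ^ 2 * s = x * (ρ * Z / 2) := by rw [← hxs]; ring
    have e2 : Real.exp (-(x ^ 2 * s) / 2) ≤ Real.exp (-(1/4) * x) * Real.exp (-Z ^ 2 / 2) := by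
      rw [← Real.exp_add]
      apply Real.exp_le_exp.2
      rw [e1]
      have a1 : x * Z * 2 ≤ x * Z * ρ := by gcongr
      have a2 : x * 1 ≤ x * Z := by gcongr
      have a3 : 2 * Z * Z ≤ x * Z := by gcongr
      nlinarith
    have hg := hN x (by linarith)
    have e3 : x ^ (2 * P.a + 2) * x ^ (-(2 * P.a + 1)) = x := by
      rw [← Real.rpow_add hx0]; ring_nf; simp
    have hE := Real.exp_pos (-Z ^ 2 / 2)
    have hE' := Real.exp_pos (-(1/4) * x)
    have hX := Real.rpow_pos_of_pos hx0 (-(2 * P.a + 1))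
    calc x * (Real.exp (-(x ^ 2 * s) / 2) * I)
        ≤ x * ((Real.exp (-(1/4) * x) * Real.exp (-Z ^ 2 / 2)) * I) := by gcongr
      _ = (I * (x ^ (2 * P.a + 2) * Real.exp (-(1/4) * x))) * Real.exp (-Z ^ 2 / 2) *
            x ^ (-(2 * P.a + 1)) := by
          nth_rewrite 1 [← e3]; ring
      _ ≤ Cst P * Real.exp (-Z ^ 2 / 2) * x ^ (-(2 * P.a + 1)) := by gcongr
      _ ≤ D := by rw [← hτZ]; exact hD
      _ ≤ ρ * Z / 2 * D := le_mul_of_one_le_left hDpos.le (by nlinarith)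
  unfold postExp
  rw [← mul_div_assoc, div_le_iff₀ hDpos]
  have h5 := mul_le_mul_of_nonneg_left hnum hx0.le
  refine h5.trans ?_
  calc x * (s * D + Real.exp (-(x ^ 2 * s) / 2) * I)
      = (x * s) * D + x * (Real.exp (-(x ^ 2 * s) / 2) * I) := by ring
    _ ≤ ρ * Z / 2 * D + ρ * Z / 2 * D := by rw [hxs]; linarith
    _ = _ := by ring

lemma postExp_abs (P : Prior) (x τ : ℝ) :
    postExp P (fun κ => κ) |x| τ = postExp P (fun κ => κ) x τ := by
  simp [postExp, wt, sq_abs]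

lemma gauss_eq (θ x : ℝ) : gauss (x - θ) = ProbabilityTheory.gaussianPDFReal θ 1 x := by
  simp [gauss, ProbabilityTheory.gaussianPDFReal]

lemma E1_le (θ B : ℝ) (f : ℝ → ℝ) (h0 : ∀ x, 0 ≤ f x) (h1 : ∀ x, f x ≤ B) : E1 θ f ≤ B := by
  unfold E1
  simp only [gauss_eq]
  calc (∫ x : ℝ, f x * ProbabilityTheory.gaussianPDFReal θ 1 x)
      ≤ ∫ x : ℝ, B * ProbabilityTheory.gaussianPDFReal θ 1 x := by
        refine integral_mono_of_nonneg (ae_of_all _ fun x => ?_)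
          ((ProbabilityTheory.integrable_gaussianPDFReal θ 1).const_mul B) (ae_of_all _ fun x => ?_)
        · exact mul_nonneg (h0 x) (ProbabilityTheory.gaussianPDFReal_nonneg _ _ _)
        · exact mul_le_mul_of_nonneg_right (h1 x) (ProbabilityTheory.gaussianPDFReal_nonneg _ _ _)
    _ = B := by
        rw [integral_const_mul, ProbabilityTheory.integral_gaussianPDFReal_eq_one θ one_ne_zero,
          mul_one]

end OneGroup

/-- equation (A.14): uniformly in the true mean `θ`,
`E_θ(T_τ(X) - X)² ≤ ρ² ζ_τ² (1 + o(1))` as `τ → 0`, where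
`ζ_τ² = 2 log(1/τ^{2a})`, for any fixed `ρ > c > 2`. -/
theorem expected_squared_shrinkage_bound (P : Prior) (c ρ : ℝ) (hc : 2 < c) (hρ : c < ρ) :
    ∃ ε : ℝ → ℝ, Tendsto ε (nhdsWithin 0 (Ioi 0)) (nhds 0) ∧
      ∃ τ₁ > (0:ℝ), ∀ τ ∈ Ioo (0:ℝ) 1, τ < τ₁ →
        ∀ θ : ℝ, E1 θ (fun x => (T P τ x - x) ^ 2) ≤
          ρ ^ 2 * (2 * Real.log (1 / τ ^ (2 * P.a))) * (1 + ε τ) := by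
  refine ⟨fun _ => 0, tendsto_const_nhds, ?_⟩
  by_cases hint : IntegrableOn (pw P) (Ioi 0)
  · obtain ⟨N, hN1, hNt, hN⟩ := growth P (∫ t in Ioi (0:ℝ), pw P t)
    have ha := P.a_pos
    refine ⟨Real.exp (-(N ^ 2 / (4 * P.a))), Real.exp_pos _, fun τ hτ hτ1 θ => ?_⟩
    have hlog : Real.log (1 / τ ^ (2 * P.a)) = -(2 * P.a * Real.log τ) := by
      rw [one_div, Real.log_inv, Real.log_rpow hτ.1]
    have hl : Real.log τ < -(N ^ 2 / (4 * P.a)) := by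
      rw [Real.log_lt_iff_lt_exp hτ.1]; exact hτ1
    have hZN : N ^ 2 ≤ 2 * Real.log (1 / τ ^ (2 * P.a)) := by
      rw [hlog]
      have : N ^ 2 = 4 * P.a * (N ^ 2 / (4 * P.a)) := by field_simp
      nlinarith
    set Z := Real.sqrt (2 * Real.log (1 / τ ^ (2 * P.a))) with hZ
    have hZ2 : 2 * Real.log (1 / τ ^ (2 * P.a)) = Z ^ 2 :=
      (Real.sq_sqrt (le_trans (sq_nonneg _) hZN)).symm
    have hNZ : N ≤ Z := Real.le_sqrt_of_sq_le hZN
    have hτZ : τ ^ (2 * P.a) = Real.exp (-Z ^ 2 / 2) := by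
      rw [← hZ2, hlog, Real.rpow_def_of_pos hτ.1]; congr 1; ring
    rw [hZ2, add_zero, mul_one, ← mul_pow]
    apply E1_le
    · intro x; positivity
    · intro x
      have e : (T P τ x - x) ^ 2 = (|x| * postExp P (fun κ => κ) |x| τ) ^ 2 := by
        rw [mul_pow, sq_abs, postExp_abs, T]; ring
      show (T P τ x - x) ^ 2 ≤ _
      rw [e]
      have hp := postExp_nonneg P |x| τ
      apply pow_le_pow_left₀ (by positivity)
      by_cases hx : ρ * Z < |x|
      · exact key P ρ N τ Z |x| (by linarith) hint hN1 hNt hN hτ hNZ hτZ hx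
      · push Not at hx
        exact (mul_le_of_le_one_right (abs_nonneg x) (postExp_le_one P |x| τ hint)).trans hx
  · refine ⟨1, one_pos, fun τ hτ _ θ => ?_⟩
    have ha := P.a_pos
    have hlog : 0 ≤ Real.log (1 / τ ^ (2 * P.a)) := by
      rw [one_div, Real.log_inv, Real.log_rpow hτ.1]
      have := Real.log_neg hτ.1 hτ.2
      nlinarith
    apply E1_le
    · intro x; positivity
    · intro x
      have hD : (∫ t in Ioi (0:ℝ), wt P x τ t) = 0 :=
        integral_undef fun h => hint (pw_int_of_wt P x τ h)
      simp only [T, postExp, hD]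
      simp only [div_zero, sub_zero, mul_one, sub_self]
      have : 0 ≤ ρ ^ 2 * (2 * Real.log (1 / τ ^ (2 * P.a))) := by positivity
      linarith
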